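/- Given a nihil decomposition A = A₁ ⊕ A₀, suppose a weak multiplier T of A is written as T = T₁ + R, where T₁ is a K-linear weak multiplier of A with T₁(A) ⊆ A₁ and T₁(A₀) = {0}, and R : A → A satisfies R(A) ⊆ A₀. Then T is a multiplier of A if and only if R(x₁·y₁) = x₁·T₁(y₁) − T₁(x₁·y₁) for all x₁, y₁ ∈ A₁. -/

import Mathlib

/-- A function `T : A → A` is a weak multiplier of `A` if
`x * T y = T x * y` for all `x, y`. -/
def IsWeakMultiplier {A : Type*} [Mul A] (T : A → A) : Prop :=
  ∀ x y : A, x * T y = T x * y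

/-- A function `T : A → A` is a multiplier of `A` if
`x * T y = T (x * y) = T x * y` for all `x, y`. -/
def IsMultiplier {A : Type*} [Mul A] (T : A → A) : Prop :=
  ∀ x y : A, x * T y = T (x * y) ∧ T (x * y) = T x * y

/-! For a weak multiplier, `x * T (y + a) = T x * (y + a) = T x * y = x * T y` whenever `a`
annihilates `A` on both sides. Hence both sides of `T (x * y) = x * T y` depend only on `x` and `y`
modulo the annihilator, and the identity need only be checked on representatives. There
`x * T y = x * T₁ y`, since `T` and `T₁` differ by `R`, which takes values in the annihilator. -/

/-- The intersection `A₀ = Ann_l(A) ∩ Ann_r(A)` of the left and right annihilators of `A`, the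
second summand of a nihil decomposition. It is encoded as a bare set, so that it makes sense
without reference to scalars. -/
def twoSidedAnnihilator (A : Type*) [Mul A] [Zero A] : Set A :=
  {a | (∀ x, a * x = 0) ∧ ∀ x, x * a = 0}

theorem IsWeakMultiplier.isMultiplier_iff_map_mul {A : Type*} [Mul A] {T : A → A}
    (hT : IsWeakMultiplier T) : IsMultiplier T ↔ ∀ x y, T (x * y) = x * T y :=
  ⟨fun h x y => (h x y).1.symm, fun h x y => ⟨(h x y).symm, (h x y).trans (hT x y)⟩⟩

section NonUnitalNonAssocSemiring

variable {A : Type*} [NonUnitalNonAssocSemiring A] {T : A → A} {a : A}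

theorem add_mul_of_mem_twoSidedAnnihilator (ha : a ∈ twoSidedAnnihilator A) (x y : A) :
    (x + a) * y = x * y := by
  rw [add_mul, ha.1, add_zero]

theorem mul_add_of_mem_twoSidedAnnihilator (ha : a ∈ twoSidedAnnihilator A) (x y : A) :
    x * (y + a) = x * y := by
  rw [mul_add, ha.2, add_zero]

theorem IsWeakMultiplier.mul_map_add_of_mem_twoSidedAnnihilator (hT : IsWeakMultiplier T)
    (ha : a ∈ twoSidedAnnihilator A) (x y : A) : x * T (y + a) = x * T y := by
  rw [hT, mul_add_of_mem_twoSidedAnnihilator ha, hT]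

theorem IsWeakMultiplier.isMultiplier_iff_forall_mem (hT : IsWeakMultiplier T) {S : Set A}
    (hS : ∀ x, ∃ s a, s ∈ S ∧ a ∈ twoSidedAnnihilator A ∧ s + a = x) :
    IsMultiplier T ↔ ∀ x ∈ S, ∀ y ∈ S, T (x * y) = x * T y := by
  rw [hT.isMultiplier_iff_map_mul]
  refine ⟨fun h x _ y _ => h x y, fun h x y => ?_⟩
  obtain ⟨s, a, hs, ha, rfl⟩ := hS x
  obtain ⟨t, b, ht, hb, rfl⟩ := hS y
  calc T ((s + a) * (t + b))
      = T (s * t) := by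
        rw [mul_add_of_mem_twoSidedAnnihilator hb, add_mul_of_mem_twoSidedAnnihilator ha]
    _ = s * T t := h s hs t ht
    _ = (s + a) * T (t + b) := by
        rw [hT.mul_map_add_of_mem_twoSidedAnnihilator hb, add_mul_of_mem_twoSidedAnnihilator ha]

end NonUnitalNonAssocSemiring

theorem weakMultiplier_isMultiplier_iff_general {A : Type*} [NonUnitalNonAssocRing A]
    {T T₁ R : A → A} {S : Set A}
    (hS : ∀ x, ∃ s a, s ∈ S ∧ a ∈ twoSidedAnnihilator A ∧ s + a = x)
    (hT : IsWeakMultiplier T) (hsum : ∀ x, T x = T₁ x + R x)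
    (hR : ∀ x, R x ∈ twoSidedAnnihilator A) :
    IsMultiplier T ↔ ∀ x ∈ S, ∀ y ∈ S, R (x * y) = x * T₁ y - T₁ (x * y) := by
  have mul_map (x y : A) : x * T y = x * T₁ y := by
    rw [hsum, mul_add_of_mem_twoSidedAnnihilator (hR y)]
  simp only [hT.isMultiplier_iff_forall_mem hS, mul_map]
  simp only [hsum, eq_sub_iff_add_eq']

theorem weakMultiplier_isMultiplier_iff
    {K A : Type*} [Field K] [NonUnitalNonAssocRing A] [Module K A]
    [SMulCommClass K A A] [IsScalarTower K A A]
    (A₁ A₀ : Submodule K A)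
    (hA₀ : (A₀ : Set A) = {a : A | (∀ x : A, a * x = 0) ∧ (∀ x : A, x * a = 0)})
    (hcompl : IsCompl A₁ A₀)
    (T T₁ R : A → A)
    (hT : IsWeakMultiplier T)
    (hsum : ∀ x : A, T x = T₁ x + R x)
    (hT₁w : IsWeakMultiplier T₁)
    (hT₁lin : ∀ (a b : K) (x y : A), T₁ (a • x + b • y) = a • T₁ x + b • T₁ y)
    (hT₁ran : ∀ x : A, T₁ x ∈ A₁) (hT₁ann : ∀ x ∈ A₀, T₁ x = 0)
    (hR : ∀ x : A, R x ∈ A₀) :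
    IsMultiplier T ↔
      ∀ x₁ ∈ A₁, ∀ y₁ ∈ A₁, R (x₁ * y₁) = x₁ * T₁ y₁ - T₁ (x₁ * y₁) := by
  have annihilator_eq : twoSidedAnnihilator A = A₀ := hA₀.symm
  exact weakMultiplier_isMultiplier_iff_general (S := A₁)
    (annihilator_eq ▸ Submodule.codisjoint_iff_exists_add_eq.mp hcompl.codisjoint) hT hsum
    (annihilator_eq ▸ hR)
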